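/- For every prime p not dividing 2·3·31, the polynomial x^3 + x + 1 has exactly 3 roots modulo p if and only if there exist integers X, Y with p = X^2 + 31Y^2. -/

import Mathlib

/-!
For a prime `p` at which `-31` is a square, choose a form `p x² + b x y + c y²` of discriminant
`-31`. By Cardano's formulas the roots of `x³ + x + 1` are built from the cube roots of
`δ = (b + 3 √-3) / 2`, whose norm is `-1` modulo `p`, and Frobenius multiplies these cube roots by
the cubic symbol of `δ` at `p`, up to inverses. Hence the polynomial splits modulo `p` exactly when
that symbol is trivial.

Extend the symbol multiplicatively from `p` to all positive `a`. Cubic reciprocity in rational form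
makes it, for `b` prime to `3`, a Dirichlet character of `a` modulo `N δ = a c - 1`. As `a c ≡ 1`
modulo `N δ`, the symbol attached to `a x² + b x y + c y²` does not change under
`(x, y) ↦ (-y, x)`; nor does it under `x ↦ x + y`, so it is an invariant of the class of the form.
It is trivial on `x² + x y + 8 y²` but not on `2 x² ± x y + 4 y²`, and of these forms only the first
represents the odd primes `X² + 31 Y²`.

Reciprocity is proved for `δ` the Jacobi sum of a cubic character modulo `q`: the quotient of `δ` by
its conjugate is the cube of a quotient of Gauss sums, on which Frobenius is explicit. Up to sign,
every primary Eisenstein integer is a product of such sums, their conjugates and rational primes.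
-/

open QuadraticAlgebra

/-- The ring `ℤ[ω]` of Eisenstein integers, where `ω ^ 2 = -1 - ω`. -/
abbrev EisensteinInt : Type := QuadraticAlgebra ℤ (-1) (-1)

namespace EisensteinInt

lemma norm_eq (z : EisensteinInt) : z.norm = z.re ^ 2 - z.re * z.im + z.im ^ 2 := by
  rw [QuadraticAlgebra.norm_def]
  ring

lemma norm_nonneg (z : EisensteinInt) : 0 ≤ z.norm := by
  rw [norm_eq]
  nlinarith [sq_nonneg (2 * z.re - z.im), sq_nonneg z.im]

lemma norm_eq_zero {z : EisensteinInt} : z.norm = 0 ↔ z = 0 := by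
  refine ⟨fun h ↦ ?_, fun h ↦ by simp [h]⟩
  rw [norm_eq] at h
  have him : z.im = 0 := by
    rw [← sq_eq_zero_iff]
    nlinarith [sq_nonneg (2 * z.re - z.im), sq_nonneg z.im]
  have hre : z.re = 0 := by simpa [him] using h
  ext <;> simp [him, hre]

instance : NoZeroDivisors EisensteinInt where
  eq_zero_or_eq_zero_of_mul_eq_zero {z w} h := by
    rwa [← norm_eq_zero, map_mul, mul_eq_zero, norm_eq_zero, norm_eq_zero] at h

instance : IsDomain EisensteinInt := NoZeroDivisors.to_isDomain _

lemma mul_star (z : EisensteinInt) : z * star z = (z.norm : EisensteinInt) := by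
  simp [← algebraMap_norm_eq_mul_star]

lemma natCast_dvd_iff {n : ℕ} {z : EisensteinInt} :
    (n : EisensteinInt) ∣ z ↔ (n : ℤ) ∣ z.re ∧ (n : ℤ) ∣ z.im := by
  refine ⟨?_, fun ⟨⟨a, ha⟩, ⟨b, hb⟩⟩ ↦ ⟨⟨a, b⟩, by ext <;> simp [ha, hb]⟩⟩
  rintro ⟨w, rfl⟩
  simp

lemma omega_sq_add_omega_add_one : (ω : EisensteinInt) ^ 2 + ω + 1 = 0 := by
  rw [pow_two]
  ext <;> simp

lemma star_omega : star (ω : EisensteinInt) = ω ^ 2 := by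
  rw [pow_two]
  ext <;> simp

/-- The square root `1 + 2 ω` of `-3`. -/
def sqrtNegThree : EisensteinInt :=
  ⟨1, 2⟩

lemma sqrtNegThree_sq : sqrtNegThree ^ 2 = -3 := by
  rw [pow_two]
  ext <;> simp [sqrtNegThree]

lemma star_sqrtNegThree : star sqrtNegThree = -sqrtNegThree := by
  ext <;> simp [sqrtNegThree]

lemma sub_star (z : EisensteinInt) : z - star z = z.im * sqrtNegThree := by
  ext <;> simp [sqrtNegThree, mul_two]

section RingHom

variable {R : Type*} [CommRing R] (φ : EisensteinInt →+* R)

lemma map_apply (z : EisensteinInt) : φ z = z.re + z.im * φ ω := by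
  conv_lhs => rw [show z = (z.re : EisensteinInt) + z.im * (ω : EisensteinInt) by ext <;> simp]
  simp only [map_add, map_mul, map_intCast]

lemma map_star_apply (z : EisensteinInt) : φ (star z) = z.re + z.im * φ ω ^ 2 := by
  simpa [starRingEnd_apply, star_omega] using map_apply (φ.comp (starRingEnd _)) z

lemma map_omega_sq_add_map_omega_add_one : φ ω ^ 2 + φ ω + 1 = 0 := by
  simpa using congrArg φ omega_sq_add_omega_add_one

lemma map_sqrtNegThree_sq : φ sqrtNegThree ^ 2 = -3 := by
  rw [← map_pow, sqrtNegThree_sq, map_neg, map_ofNat]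

lemma isPrimitiveRoot_map_omega [IsDomain R] [NeZero ((3 : ℕ) : R)] : IsPrimitiveRoot (φ ω) 3 := by
  rw [← Polynomial.isRoot_cyclotomic_iff, Polynomial.cyclotomic_three]
  simpa [Polynomial.IsRoot] using map_omega_sq_add_map_omega_add_one φ

end RingHom

lemma isPrimitiveRoot_omega : IsPrimitiveRoot (ω : EisensteinInt) 3 :=
  isPrimitiveRoot_map_omega (RingHom.id EisensteinInt)

lemma star_eq_sq_of_pow_three_eq_one {x : EisensteinInt} (hx : x ^ 3 = 1) : star x = x ^ 2 := by
  obtain ⟨i, -, rfl⟩ := isPrimitiveRoot_omega.eq_pow_of_pow_eq_one hx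
  rw [star_pow, star_omega, ← pow_mul, ← pow_mul, mul_comm]

lemma map_injOn_cubeRoots {R : Type*} [CommRing R] [IsDomain R] [NeZero ((3 : ℕ) : R)]
    (φ : EisensteinInt →+* R) : Set.InjOn φ {x | x ^ 3 = 1} := by
  intro x hx y hy h
  obtain ⟨i, hi, rfl⟩ := isPrimitiveRoot_omega.eq_pow_of_pow_eq_one hx
  obtain ⟨j, hj, rfl⟩ := isPrimitiveRoot_omega.eq_pow_of_pow_eq_one hy
  rw [map_pow, map_pow] at h
  rw [(isPrimitiveRoot_map_omega φ).pow_inj hi hj h]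

section Frobenius

variable {R : Type*} [CommRing R] (φ : EisensteinInt →+* R) {p : ℕ} [Fact p.Prime] [CharP R p]

lemma map_pow_char (z : EisensteinInt) : φ z ^ p = z.re + z.im * φ ω ^ p := by
  simpa [frobenius_def] using map_apply ((frobenius R p).comp φ) z

lemma map_pow_char_of_mod_three_eq_one (hp1 : p % 3 = 1) (z : EisensteinInt) :
    φ z ^ p = φ z := by
  rw [map_pow_char, ← map_pow, pow_eq_pow_mod p isPrimitiveRoot_omega.pow_eq_one, hp1, pow_one,
    ← map_apply]

lemma map_pow_char_of_mod_three_eq_two (hp2 : p % 3 = 2) (z : EisensteinInt) :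
    φ z ^ p = φ (star z) := by
  rw [map_pow_char, ← map_pow, pow_eq_pow_mod p isPrimitiveRoot_omega.pow_eq_one, hp2,
    map_star_apply, map_pow]

end Frobenius

section Field

variable {K : Type*} [Field K]

variable (K) in
lemma exists_ringHom [IsAlgClosed K] : Nonempty (EisensteinInt →+* K) := by
  have hdeg : (Polynomial.X ^ 2 + Polynomial.X + 1 : Polynomial K).degree = 2 := by
    compute_degree!
  obtain ⟨w, hw⟩ := IsAlgClosed.exists_root _ (hdeg.trans_ne two_ne_zero)
  have hw : w ^ 2 + w + 1 = 0 := by simpa [Polynomial.IsRoot] using hw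
  have hmul : w * w = (-1 : ℤ) • (1 : K) + (-1 : ℤ) • w := by
    simp only [neg_smul, one_smul]
    linear_combination hw
  exact ⟨(QuadraticAlgebra.lift ⟨w, hmul⟩ : EisensteinInt →ₐ[ℤ] K).toRingHom⟩

lemma neZero_three {p : ℕ} [CharP K p] (hp : p.Prime) (hp3 : p ≠ 3) : NeZero ((3 : ℕ) : K) :=
  NeZero.of_not_dvd K (mt (Nat.prime_dvd_prime_iff_eq hp Nat.prime_three).mp hp3)

variable (K) in
lemma natCast_dvd_iff_forall_map_eq_zero [IsAlgClosed K] {p : ℕ} [CharP K p] (hp : p.Prime)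
    (hp3 : p ≠ 3) {z : EisensteinInt} :
    (p : EisensteinInt) ∣ z ↔ ∀ φ : EisensteinInt →+* K, φ z = 0 := by
  refine ⟨fun ⟨w, hw⟩ φ ↦ by simp [hw], fun h ↦ ?_⟩
  have := neZero_three (K := K) hp hp3
  obtain ⟨φ⟩ := exists_ringHom K
  have hφ : (z.re : K) + z.im * φ ω = 0 := by rw [← map_apply, h]
  have hφ' : (z.re : K) + z.im * φ ω ^ 2 = 0 := by
    rw [← map_star_apply]
    exact h (φ.comp (starRingEnd _))
  have hω : φ ω - φ ω ^ 2 ≠ 0 := by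
    intro h
    have := (isPrimitiveRoot_map_omega φ).pow_inj (i := 1) (j := 2) (by simp) (by simp)
      (by linear_combination h)
    omega
  have him : (z.im : K) = 0 := by
    refine (mul_eq_zero.mp ?_).resolve_right hω
    linear_combination hφ - hφ'
  have hre : (z.re : K) = 0 := by simpa [him] using hφ
  exact natCast_dvd_iff.mpr
    ⟨(CharP.intCast_eq_zero_iff K p _).mp hre, (CharP.intCast_eq_zero_iff K p _).mp him⟩

end Field

end EisensteinInt

/-- `x` is the value of the cubic character of `ℚ(ω)` at `δ / star δ` modulo the rational prime `p`:
`x` is a cube root of unity with `(δ / star δ) ^ ((p ∓ 1) / 3) ≡ x ^ p` modulo `p`, where `p ≡ ±1`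
modulo `3`. The denominator is cleared, and natural division makes `(p + 1) / 3` equal to
`(p ∓ 1) / 3`. The exponent `p` of `x` makes the value multiplicative in `p`. -/
def HasCubicSymbol (δ : EisensteinInt) (p : ℕ) (x : EisensteinInt) : Prop :=
  x ^ 3 = 1 ∧ (p : EisensteinInt) ∣ δ ^ ((p + 1) / 3) - x ^ p * star δ ^ ((p + 1) / 3)

namespace HasCubicSymbol

variable {δ ε x y : EisensteinInt} {p : ℕ}

lemma mul (hδ : HasCubicSymbol δ p x) (hε : HasCubicSymbol ε p y) :
    HasCubicSymbol (δ * ε) p (x * y) := by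
  refine ⟨by rw [mul_pow, hδ.1, hε.1, one_mul], ?_⟩
  convert (hδ.2.mul_right (ε ^ ((p + 1) / 3))).add
    (hε.2.mul_left (x ^ p * star δ ^ ((p + 1) / 3))) using 1
  rw [star_mul]
  ring

protected lemma star (h : HasCubicSymbol δ p x) : HasCubicSymbol (star δ) p (x ^ 2) := by
  refine ⟨by rw [pow_right_comm, h.1, one_pow], ?_⟩
  have hxp : (x ^ p) ^ 3 = 1 := by rw [pow_right_comm, h.1, one_pow]
  convert h.2.mul_left (-(x ^ p) ^ 2) using 1
  rw [star_star, pow_right_comm]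
  linear_combination -star δ ^ ((p + 1) / 3) * hxp

lemma neg (h : HasCubicSymbol δ p x) : HasCubicSymbol (-δ) p x := by
  refine ⟨h.1, ?_⟩
  convert h.2.mul_left ((-1) ^ ((p + 1) / 3)) using 1
  rw [star_neg, neg_pow δ, neg_pow (star δ)]
  ring

lemma intCast (n : ℤ) (p : ℕ) : HasCubicSymbol n p 1 := by
  simp [HasCubicSymbol]

lemma congr (h : HasCubicSymbol δ p x) (hδε : (p : EisensteinInt) ∣ δ - ε) :
    HasCubicSymbol ε p x := by
  refine ⟨h.1, ?_⟩
  have hstar : (p : EisensteinInt) ∣ star δ - star ε := by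
    simpa [starRingEnd_apply] using map_dvd (starRingEnd EisensteinInt) hδε
  have hpow := hδε.trans (sub_dvd_pow_sub_pow _ _ ((p + 1) / 3))
  have hpow_star := hstar.trans (sub_dvd_pow_sub_pow _ _ ((p + 1) / 3))
  convert (h.2.sub hpow).add (hpow_star.mul_left (x ^ p)) using 1
  ring

lemma unique (hp : p.Prime) (hp3 : p ≠ 3) (hδ : ¬ (p : ℤ) ∣ δ.norm)
    (hx : HasCubicSymbol δ p x) (hy : HasCubicSymbol δ p y) : x = y := by
  have : Fact p.Prime := ⟨hp⟩
  let K := AlgebraicClosure (ZMod p)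
  have := EisensteinInt.neZero_three (K := K) hp hp3
  obtain ⟨φ⟩ := EisensteinInt.exists_ringHom K
  have hstar : φ (star δ) ≠ 0 := by
    refine fun h ↦ hδ ((CharP.intCast_eq_zero_iff K p _).mp ?_)
    rw [← map_intCast φ, ← EisensteinInt.mul_star, map_mul, h, mul_zero]
  have hφ {z} (hz : HasCubicSymbol δ p z) :
      φ δ ^ ((p + 1) / 3) = φ z ^ p * φ (star δ) ^ ((p + 1) / 3) := by
    have := (EisensteinInt.natCast_dvd_iff_forall_map_eq_zero K hp hp3).mp hz.2 φ
    simpa [sub_eq_zero] using this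
  have hpow : φ x ^ p = φ y ^ p :=
    mul_right_cancel₀ (pow_ne_zero _ hstar) ((hφ hx).symm.trans (hφ hy))
  exact EisensteinInt.map_injOn_cubeRoots φ hx.1 hy.1 (frobenius_inj K p hpow)

end HasCubicSymbol

section JacobiSum

lemma mulChar_apply_pow_eq_one {R S : Type*} [CommMonoid R] [CommRing S] {χ : MulChar R S} {n : ℕ}
    (hχ : χ ^ n = 1) (hn : n ≠ 0) {a : R} (ha : IsUnit a) : χ a ^ n = 1 := by
  rw [← MulChar.pow_apply' _ hn, hχ, MulChar.one_apply ha]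

lemma mul_self_eq_inv_of_pow_three_eq_one {G : Type*} [Group G] {g : G} (hg : g ^ 3 = 1) :
    g * g = g⁻¹ :=
  eq_inv_of_mul_eq_one_left (by rw [← hg, pow_three'])

lemma mulChar_apply_pow_mul_gaussSum_pow {R S : Type*} [CommRing R] [Fintype R] [CommRing S] {p : ℕ}
    [Fact p.Prime] [CharP S p] (hp : IsUnit (p : R)) (η : MulChar R S) (ψ : AddChar R S) :
    η p ^ p * gaussSum η ψ ^ p = gaussSum (η ^ p) ψ := by
  obtain ⟨u, hu⟩ := hp
  rw [gaussSum_frob, AddChar.pow_mulShift, ← gaussSum_mulShift (η ^ p) ψ u, hu,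
    MulChar.pow_apply' _ (Fact.out : p.Prime).ne_zero]

lemma jacobiSum_mul_jacobiSum_inv_of_isDomain {F R : Type*} [Field F] [Fintype F] [CommRing R]
    [IsDomain R] {χ φ : MulChar F R} (h : ringChar R ≠ ringChar F) (hχ : χ ≠ 1) (hφ : φ ≠ 1)
    (hχφ : χ * φ ≠ 1) : jacobiSum χ φ * jacobiSum χ⁻¹ φ⁻¹ = Fintype.card F := by
  let f := algebraMap R (FractionRing R)
  have hf : Function.Injective f := IsFractionRing.injective R (FractionRing R)
  have hchar : ringChar (FractionRing R) = ringChar R :=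
    ringChar.eq_iff.mpr ((f.charP_iff hf _).mp inferInstance)
  have := jacobiSum_mul_jacobiSum_inv (hchar.trans_ne h)
    ((MulChar.ringHomComp_ne_one_iff hf).mpr hχ) ((MulChar.ringHomComp_ne_one_iff hf).mpr hφ)
    (by rwa [← MulChar.ringHomComp_mul, MulChar.ringHomComp_ne_one_iff hf])
  apply hf
  rw [map_mul, map_natCast, ← jacobiSum_ringHomComp, ← jacobiSum_ringHomComp,
    ← MulChar.ringHomComp_inv, ← MulChar.ringHomComp_inv, this]

section CharP

variable {F K : Type*} [Field F] [Fintype F] [Field K] {η : MulChar F K} {ψ : AddChar F K}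

lemma jacobiSum_self_eq_gaussSum_div_pow_three_mul (hF : (Fintype.card F : K) ≠ 0)
    (hψ : ψ.IsPrimitive) (hη3 : η ^ 3 = 1) (hη1 : η ≠ 1) :
    jacobiSum η η = (gaussSum η ψ / gaussSum η⁻¹ ψ) ^ 3 * jacobiSum η⁻¹ η⁻¹ := by
  have hinv := mul_self_eq_inv_of_pow_three_eq_one hη3
  have hinv' : η⁻¹ * η⁻¹ = η := by rw [← mul_inv, hinv, inv_inv]
  have hη1' : η⁻¹ ≠ 1 := inv_ne_one.mpr hη1
  have hg : gaussSum η ψ ≠ 0 := gaussSum_ne_zero_of_nontrivial hF hη1 hψ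
  have hg' : gaussSum η⁻¹ ψ ≠ 0 := gaussSum_ne_zero_of_nontrivial hF hη1' hψ
  rw [jacobiSum_eq_gaussSum_mul_gaussSum_div_gaussSum hF (by rwa [hinv]) hψ,
    jacobiSum_eq_gaussSum_mul_gaussSum_div_gaussSum hF (by rwa [hinv']) hψ, hinv, hinv']
  field_simp

-- The Frobenius maps `g(η) / g(η⁻¹)` to `η p ^ p` times itself or its inverse.
lemma gaussSum_div_gaussSum_inv_pow {p : ℕ} [Fact p.Prime] [CharP K p] (hp3 : p ≠ 3)
    (hpF : IsUnit (p : F)) (hF : (Fintype.card F : K) ≠ 0) (hψ : ψ.IsPrimitive)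
    (hη3 : η ^ 3 = 1) (hη1 : η ≠ 1) :
    (gaussSum η ψ / gaussSum η⁻¹ ψ) ^ (3 * ((p + 1) / 3)) = η p ^ p := by
  have hp : p.Prime := Fact.out
  have hg : gaussSum η ψ ≠ 0 := gaussSum_ne_zero_of_nontrivial hF hη1 hψ
  have hg' : gaussSum η⁻¹ ψ ≠ 0 := gaussSum_ne_zero_of_nontrivial hF (inv_ne_one.mpr hη1) hψ
  have hc : (η p ^ p) ^ 3 = 1 := by
    rw [pow_right_comm, mulChar_apply_pow_eq_one hη3 three_ne_zero hpF, one_pow]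
  have hc0 : η p ^ p ≠ 0 := by rintro h; simp [h] at hc
  set y := gaussSum η ψ / gaussSum η⁻¹ ψ with hy
  have hy0 : y ≠ 0 := div_ne_zero hg hg'
  have hyp : y ^ p = η p ^ p * (gaussSum (η ^ p) ψ / gaussSum (η ^ p)⁻¹ ψ) := by
    rw [← inv_pow, ← mulChar_apply_pow_mul_gaussSum_pow hpF η ψ,
      ← mulChar_apply_pow_mul_gaussSum_pow hpF η⁻¹ ψ, MulChar.inv_apply_eq_inv', inv_pow, hy,
      div_pow]
    generalize η p ^ p = c at hc hc0 ⊢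
    field_simp
    linear_combination -hc
  obtain h | h : p % 3 = 1 ∨ p % 3 = 2 := by
    have := mt (Nat.prime_dvd_prime_iff_eq Nat.prime_three hp).mp hp3.symm
    omega
  · have hp' : p = 3 * ((p + 1) / 3) + 1 := by omega
    have hηp : η ^ p = η := by rw [hp', pow_succ, pow_mul, hη3, one_pow, one_mul]
    rw [hηp] at hyp
    refine mul_right_cancel₀ hy0 ?_
    rw [← pow_succ, ← hp', hyp]
  · have hp' : 3 * ((p + 1) / 3) = p + 1 := by omega
    have hηp : η ^ p = η⁻¹ := by
      rw [eq_inv_iff_mul_eq_one, ← pow_succ, ← hp', pow_mul, hη3, one_pow]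
    rw [hηp, inv_inv, ← inv_div, ← hy] at hyp
    rw [hp', pow_succ, hyp, inv_mul_cancel_right₀ hy0]

lemma jacobiSum_self_pow {p : ℕ} [Fact p.Prime] [CharP K p] (hp3 : p ≠ 3)
    (hpF : IsUnit (p : F)) (hF : (Fintype.card F : K) ≠ 0) (hψ : ψ.IsPrimitive)
    (hη3 : η ^ 3 = 1) (hη1 : η ≠ 1) :
    jacobiSum η η ^ ((p + 1) / 3) = η p ^ p * jacobiSum η⁻¹ η⁻¹ ^ ((p + 1) / 3) := by
  rw [jacobiSum_self_eq_gaussSum_div_pow_three_mul hF hψ hη3 hη1, mul_pow, ← pow_mul,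
    gaussSum_div_gaussSum_inv_pow hp3 hpF hF hψ hη3 hη1]

end CharP

namespace EisensteinInt

variable {R : Type*} [CommRing R] {χ : MulChar R EisensteinInt}

lemma ringHomComp_star (hχ : χ ^ 3 = 1) : χ.ringHomComp (starRingEnd EisensteinInt) = χ⁻¹ := by
  rw [← mul_self_eq_inv_of_pow_three_eq_one hχ, ← pow_two]
  ext1 u
  rw [MulChar.pow_apply_coe, MulChar.ringHomComp_apply, starRingEnd_apply,
    star_eq_sq_of_pow_three_eq_one (mulChar_apply_pow_eq_one hχ three_ne_zero u.isUnit)]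

lemma star_jacobiSum_self [Fintype R] (hχ : χ ^ 3 = 1) :
    star (jacobiSum χ χ) = jacobiSum χ⁻¹ χ⁻¹ := by
  rw [← ringHomComp_star hχ, jacobiSum_ringHomComp, starRingEnd_apply]

variable {F : Type*} [Field F] [Fintype F] {θ : MulChar F EisensteinInt}

lemma norm_jacobiSum_self (hθ3 : θ ^ 3 = 1) (hθ1 : θ ≠ 1) :
    (jacobiSum θ θ).norm = Fintype.card F := by
  have hchar : ringChar EisensteinInt ≠ ringChar F := by
    rw [ringChar.eq_zero]
    exact (CharP.ringChar_ne_zero_of_finite F).symm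
  have hθθ : θ * θ ≠ 1 := by
    rw [mul_self_eq_inv_of_pow_three_eq_one hθ3]
    exact inv_ne_one.mpr hθ1
  have := jacobiSum_mul_jacobiSum_inv_of_isDomain hchar hθ1 hθ1 hθθ
  rw [← star_jacobiSum_self hθ3, mul_star] at this
  exact_mod_cast this

lemma three_dvd_im_jacobiSum_self (hθ3 : θ ^ 3 = 1) (hF : 3 ∣ Fintype.card F - 1) :
    3 ∣ (jacobiSum θ θ).im := by
  obtain ⟨z, -, hz⟩ :=
    exists_jacobiSum_eq_neg_one_add (by norm_num) hθ3 hθ3 hF isPrimitiveRoot_omega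
  have hω : ((ω : EisensteinInt) - 1) ^ 2 = (3 : ℕ) * -(ω : EisensteinInt) := by
    push_cast
    linear_combination omega_sq_add_omega_add_one
  have hdvd : ((3 : ℕ) : EisensteinInt) ∣ jacobiSum θ θ - (-1 : ℤ) :=
    ⟨z * -ω, by rw [hz, hω]; push_cast; ring⟩
  simpa using (natCast_dvd_iff.mp hdvd).2

end EisensteinInt

lemma hasCubicSymbol_jacobiSum_self {p q : ℕ} [Fact q.Prime] (hp : p.Prime) (hp3 : p ≠ 3)
    (hpq : p ≠ q) {χ : MulChar (ZMod q) EisensteinInt} (hχ3 : χ ^ 3 = 1) (hχ1 : χ ≠ 1) :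
    HasCubicSymbol (jacobiSum χ χ) p (χ p) := by
  have : Fact p.Prime := ⟨hp⟩
  have hq : q.Prime := Fact.out
  have hpF : IsUnit (p : ZMod q) :=
    (ZMod.isUnit_iff_coprime p q).mpr ((Nat.coprime_primes hp hq).mpr hpq)
  refine ⟨mulChar_apply_pow_eq_one hχ3 three_ne_zero hpF, ?_⟩
  let K := AlgebraicClosure (ZMod p)
  have := EisensteinInt.neZero_three (K := K) hp hp3
  have : NeZero (q : K) := NeZero.of_not_dvd K (mt (Nat.prime_dvd_prime_iff_eq hp hq).mp hpq)
  obtain ⟨ζ, hζ⟩ := HasEnoughRootsOfUnity.exists_primitiveRoot K q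
  rw [EisensteinInt.natCast_dvd_iff_forall_map_eq_zero K hp hp3]
  intro φ
  have hη3 : χ.ringHomComp φ ^ 3 = 1 := by
    rw [MulChar.ringHomComp_pow, hχ3, MulChar.ringHomComp_one]
  have hη1 : χ.ringHomComp φ ≠ 1 := by
    contrapose! hχ1
    ext1 u
    have hu : φ (χ u) = φ 1 := by
      rw [← MulChar.ringHomComp_apply, hχ1, MulChar.one_apply_coe, map_one]
    rw [MulChar.one_apply_coe]
    exact EisensteinInt.map_injOn_cubeRoots φ (mulChar_apply_pow_eq_one hχ3 three_ne_zero u.isUnit)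
      (one_pow 3) hu
  have := jacobiSum_self_pow hp3 hpF (by simpa using NeZero.ne (q : K))
    (AddChar.zmodChar_primitive_of_primitive_root q hζ) hη3 hη1
  rw [MulChar.ringHomComp_inv, jacobiSum_ringHomComp, jacobiSum_ringHomComp,
    ← EisensteinInt.star_jacobiSum_self hχ3, MulChar.ringHomComp_apply] at this
  simp only [map_sub, map_mul, map_pow, this, sub_self]

end JacobiSum

section ResidueChar

/-- `χ` is the rational cubic residue character of `δ`: its value at every prime `p ≠ 3` not
dividing the modulus is the cubic symbol of `δ` at `p`. -/
structure IsCubicResidueChar (δ : EisensteinInt) {m : ℕ} (χ : DirichletCharacter EisensteinInt m) :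
    Prop where
  pow_three_eq_one : χ ^ 3 = 1
  hasCubicSymbol : ∀ p : ℕ, p.Prime → p ≠ 3 → ¬ p ∣ m → HasCubicSymbol δ p (χ p)

namespace IsCubicResidueChar

variable {δ ε : EisensteinInt} {m n : ℕ} {χ : DirichletCharacter EisensteinInt m}
  {θ : DirichletCharacter EisensteinInt n}

lemma mul (hχ : IsCubicResidueChar δ χ) (hθ : IsCubicResidueChar ε θ) :
    IsCubicResidueChar (δ * ε) (χ.changeLevel (dvd_mul_right m n) *
      θ.changeLevel (dvd_mul_left n m)) where
  pow_three_eq_one := by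
    rw [mul_pow, ← map_pow, ← map_pow, hχ.pow_three_eq_one, hθ.pow_three_eq_one, map_one, map_one,
      one_mul]
  hasCubicSymbol p hp hp3 hmn := by
    have hcop : IsCoprime (p : ℤ) (m * n : ℕ) :=
      Nat.isCoprime_iff_coprime.mpr ((hp.coprime_iff_not_dvd).mpr hmn)
    have hχp := DirichletCharacter.changeLevel_eq_cast_of_dvd' χ (dvd_mul_right m n) hcop
    have hθp := DirichletCharacter.changeLevel_eq_cast_of_dvd' θ (dvd_mul_left n m) hcop
    simp only [Int.cast_natCast] at hχp hθp
    rw [MulChar.mul_apply, hχp, hθp]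
    exact (hχ.hasCubicSymbol p hp hp3 (mt (·.mul_right n) hmn)).mul
      (hθ.hasCubicSymbol p hp hp3 (mt (·.mul_left m) hmn))

protected lemma star (hχ : IsCubicResidueChar δ χ) : IsCubicResidueChar (star δ) (χ ^ 2) where
  pow_three_eq_one := by rw [pow_right_comm, hχ.pow_three_eq_one, one_pow]
  hasCubicSymbol p hp hp3 hm := by
    rw [MulChar.pow_apply' _ two_ne_zero]
    exact (hχ.hasCubicSymbol p hp hp3 hm).star

lemma neg (hχ : IsCubicResidueChar δ χ) : IsCubicResidueChar (-δ) χ where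
  pow_three_eq_one := hχ.pow_three_eq_one
  hasCubicSymbol p hp hp3 hm := (hχ.hasCubicSymbol p hp hp3 hm).neg

lemma intCast (a : ℤ) (m : ℕ) :
    IsCubicResidueChar a (1 : DirichletCharacter EisensteinInt m) where
  pow_three_eq_one := one_pow 3
  hasCubicSymbol p hp _ hm := by
    rw [MulChar.one_apply ((ZMod.isUnit_iff_coprime p m).mpr (hp.coprime_iff_not_dvd.mpr hm))]
    exact HasCubicSymbol.intCast a p

end IsCubicResidueChar

namespace EisensteinInt

variable {q : ℕ} {δ J : EisensteinInt}

lemma natCast_dvd_of_dvd_norm_of_dvd_im (hq : q.Prime) (hnorm : (q : ℤ) ∣ δ.norm)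
    (him : (q : ℤ) ∣ δ.im) : (q : EisensteinInt) ∣ δ := by
  refine natCast_dvd_iff.mpr ⟨(Nat.prime_iff_prime_int.mp hq).dvd_of_dvd_pow (n := 2) ?_, him⟩
  convert hnorm.add (him.mul_right (δ.re - δ.im)) using 1
  rw [norm_eq]
  ring

lemma dvd_of_dvd_im_mul_star (hq : q.Prime) (hJ : J.norm = q) (hδ : (q : ℤ) ∣ δ.norm)
    (him : (q : ℤ) ∣ (δ * star J).im) : J ∣ δ := by
  have hJ0 : star J ≠ 0 := by
    rw [star_ne_zero, Ne, ← norm_eq_zero, hJ]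
    exact_mod_cast hq.ne_zero
  have hdvd := natCast_dvd_of_dvd_norm_of_dvd_im hq (by rw [map_mul]; exact hδ.mul_right _) him
  rw [← mul_dvd_mul_iff_right hJ0, mul_star, hJ]
  exact_mod_cast hdvd

lemma dvd_or_star_dvd_of_dvd_norm (hq : q.Prime) (hJ : J.norm = q) (hδ : (q : ℤ) ∣ δ.norm) :
    J ∣ δ ∨ star J ∣ δ := by
  have him : (q : ℤ) ∣ (δ * star J).im * (δ * star (star J)).im := by
    have : (δ * star J).im * (δ * star (star J)).im = δ.im ^ 2 * J.norm - J.im ^ 2 * δ.norm := by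
      rw [norm_eq, norm_eq, star_star]
      simp only [im_mul, im_star, mul_neg, re_star, neg_mul, one_mul, neg_neg]
      ring
    rw [this, hJ]
    exact (dvd_mul_left _ _).sub (hδ.mul_left _)
  refine ((Nat.prime_iff_prime_int.mp hq).dvd_or_dvd him).imp
    (dvd_of_dvd_im_mul_star hq hJ hδ) (dvd_of_dvd_im_mul_star hq ?_ hδ)
  rw [QuadraticAlgebra.norm_star, hJ]

lemma natCast_dvd_of_dvd_norm_of_mod_three_eq_two (hq : q.Prime) (hq2 : q % 3 = 2)
    (hδ : (q : ℤ) ∣ δ.norm) : (q : EisensteinInt) ∣ δ := by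
  refine natCast_dvd_of_dvd_norm_of_dvd_im hq hδ ?_
  have : Fact q.Prime := ⟨hq⟩
  have : NeZero ((3 : ℕ) : ZMod q) := neZero_three hq (by omega)
  by_contra him
  rw [← ZMod.intCast_zmod_eq_zero_iff_dvd] at him hδ
  have hprim : IsPrimitiveRoot (-(δ.re : ZMod q) / δ.im) 3 := by
    rw [← Polynomial.isRoot_cyclotomic_iff, Polynomial.cyclotomic_three]
    simp only [Polynomial.IsRoot, Polynomial.eval_add, Polynomial.eval_pow, Polynomial.eval_X,
      Polynomial.eval_one]
    field_simp
    rw [norm_eq] at hδ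
    push_cast at hδ
    linear_combination hδ
  have := ZMod.orderOf_dvd_card_sub_one (hprim.ne_zero three_ne_zero)
  rw [← hprim.eq_orderOf] at this
  omega

/-- `δ` is primary: it is congruent to a rational integer prime to `3` modulo `3`. -/
def IsPrimary (δ : EisensteinInt) : Prop :=
  3 ∣ δ.im ∧ ¬ 3 ∣ δ.re

lemma isPrimary_iff_norm : IsPrimary δ ↔ 3 ∣ δ.im ∧ ¬ 3 ∣ δ.norm := by
  refine and_congr_right fun him ↦ not_congr ?_
  have : δ.norm = δ.re ^ 2 + δ.im * (δ.im - δ.re) := by rw [norm_eq]; ring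
  rw [this, dvd_add_left (him.mul_right _), Int.prime_three.dvd_pow_iff_dvd two_ne_zero]

lemma IsPrimary.of_mul_left {κ : EisensteinInt} (hδ : IsPrimary (δ * κ)) (h : IsPrimary δ) :
    IsPrimary κ := by
  have hκ : 3 ∣ κ.im := by
    refine (Int.prime_three.dvd_or_dvd ?_).resolve_left h.2
    convert hδ.1.sub (h.1.mul_right (κ.re - κ.im)) using 1
    simp only [im_mul, neg_mul, one_mul]
    ring
  refine ⟨hκ, fun hre ↦ hδ.2 ?_⟩
  simpa [sub_eq_add_neg] using (hre.mul_left δ.re).sub (hκ.mul_left δ.im)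

lemma IsPrimary.eq_intCast_of_norm_eq_one (hδ : IsPrimary δ) (h : δ.norm = 1) : δ = δ.re := by
  obtain ⟨t, ht⟩ := hδ.1
  have ht0 : t = 0 := by
    rw [norm_eq, ht] at h
    have : t ^ 2 < 1 := by nlinarith [sq_nonneg (2 * δ.re - 3 * t)]
    nlinarith
  ext <;> simp [ht, ht0]

lemma exists_isCubicResidueChar_of_mod_three_eq_one (hq : q.Prime) (hq1 : q % 3 = 1) :
    ∃ (J : EisensteinInt) (χ : DirichletCharacter EisensteinInt q),
      J.norm = q ∧ IsPrimary J ∧ IsCubicResidueChar J χ := by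
  have : Fact q.Prime := ⟨hq⟩
  have hcard : 3 ∣ Fintype.card (ZMod q) - 1 := by rw [ZMod.card]; omega
  obtain ⟨χ, hχ⟩ := MulChar.exists_mulChar_orderOf (ZMod q) hcard isPrimitiveRoot_omega
  have hχ3 : χ ^ 3 = 1 := by rw [← hχ, pow_orderOf_eq_one]
  have hχ1 : χ ≠ 1 := by rintro rfl; simp at hχ
  have hnorm := norm_jacobiSum_self hχ3 hχ1
  rw [ZMod.card] at hnorm
  refine ⟨jacobiSum χ χ, χ, hnorm,
    isPrimary_iff_norm.mpr ⟨three_dvd_im_jacobiSum_self hχ3 hcard, by omega⟩, hχ3, ?_⟩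
  intro p hp hp3 hpq
  exact hasCubicSymbol_jacobiSum_self hp hp3 (by rintro rfl; exact hpq dvd_rfl) hχ3 hχ1

lemma exists_primary_factor (hq : q.Prime) (hq3 : q ≠ 3)
    (hqδ : (q : ℤ) ∣ δ.norm) :
    ∃ (J κ : EisensteinInt) (n : ℕ) (χ : DirichletCharacter EisensteinInt n),
      δ = J * κ ∧ J.norm = n ∧ 1 < n ∧ IsPrimary J ∧ IsCubicResidueChar J χ := by
  obtain h1 | h2 : q % 3 = 1 ∨ q % 3 = 2 := by
    have := mt (Nat.prime_dvd_prime_iff_eq Nat.prime_three hq).mp hq3.symm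
    omega
  · obtain ⟨J, χ, hJ, hJp, hχ⟩ := exists_isCubicResidueChar_of_mod_three_eq_one hq h1
    rcases dvd_or_star_dvd_of_dvd_norm hq hJ hqδ with ⟨κ, hκ⟩ | ⟨κ, hκ⟩
    · exact ⟨J, κ, q, χ, hκ, hJ, hq.one_lt, hJp, hχ⟩
    · have hJ' : (star J).norm = q := by rw [QuadraticAlgebra.norm_star, hJ]
      refine ⟨star J, κ, q, χ ^ 2, hκ, hJ', hq.one_lt, ?_, hχ.star⟩
      exact isPrimary_iff_norm.mpr ⟨by simpa using hJp.1, by omega⟩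
  · obtain ⟨κ, hκ⟩ := natCast_dvd_of_dvd_norm_of_mod_three_eq_two hq h2 hqδ
    refine ⟨q, κ, q ^ 2, 1, hκ, by simp, Nat.one_lt_pow two_ne_zero hq.one_lt, ?_, ?_⟩
    · exact ⟨by simp, by simp only [re_natCast]; omega⟩
    · exact_mod_cast IsCubicResidueChar.intCast q (q ^ 2)

theorem IsPrimary.exists_isCubicResidueChar {m : ℕ} (hδ : IsPrimary δ) (hm : δ.norm = m) :
    ∃ χ : DirichletCharacter EisensteinInt m, IsCubicResidueChar δ χ := by
  induction m using Nat.strong_induction_on generalizing δ with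
  | _ m ih =>
    by_cases hm1 : m = 1
    · rw [hδ.eq_intCast_of_norm_eq_one (by simp [hm, hm1])]
      exact ⟨1, IsCubicResidueChar.intCast _ m⟩
    obtain ⟨q, hq, hqm⟩ := Nat.exists_prime_and_dvd hm1
    have h3m : ¬ 3 ∣ m := by
      have := (isPrimary_iff_norm.mp hδ).2
      rw [hm] at this
      exact_mod_cast this
    have hq3 : q ≠ 3 := by rintro rfl; exact h3m hqm
    obtain ⟨J, κ, n, χ, rfl, hJ, hn, hJp, hχ⟩ :=
      exists_primary_factor hq hq3 (by rw [hm]; exact_mod_cast hqm)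
    obtain ⟨l, hl⟩ := Int.eq_ofNat_of_zero_le (norm_nonneg κ)
    obtain rfl : m = n * l := by
      rw [map_mul, hJ, hl] at hm
      exact_mod_cast hm.symm
    have hl0 : l ≠ 0 := by rintro rfl; simp at h3m
    have hlt : l < n * l := lt_mul_of_one_lt_left (Nat.pos_of_ne_zero hl0) hn
    obtain ⟨θ, hθ⟩ := ih l hlt (hδ.of_mul_left hJp) hl
    exact ⟨_, hχ.mul hθ⟩

end EisensteinInt

end ResidueChar

section CubicSymbol

/-- The cubic symbol of `δ` at the prime `p`, an arbitrary value if there is none. -/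
noncomputable def primeCubicSymbol (δ : EisensteinInt) (p : ℕ) : EisensteinInt :=
  Classical.epsilon (HasCubicSymbol δ p)

/-- The extension of `primeCubicSymbol δ` to all natural numbers by complete multiplicativity, in
analogy with the Jacobi symbol. -/
noncomputable def cubicSymbol (δ : EisensteinInt) (n : ℕ) : EisensteinInt :=
  (n.primeFactorsList.map (primeCubicSymbol δ)).prod

variable {δ ε x : EisensteinInt} {n p : ℕ}

lemma HasCubicSymbol.primeCubicSymbol_eq (h : HasCubicSymbol δ p x) (hp : p.Prime) (hp3 : p ≠ 3)
    (hδ : ¬ (p : ℤ) ∣ δ.norm) : primeCubicSymbol δ p = x :=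
  (Classical.epsilon_spec ⟨x, h⟩ : HasCubicSymbol δ p (primeCubicSymbol δ p)).unique hp hp3 hδ h

lemma primeCubicSymbol_congr (h : (p : EisensteinInt) ∣ δ - ε) :
    primeCubicSymbol δ p = primeCubicSymbol ε p := by
  have : HasCubicSymbol δ p = HasCubicSymbol ε p :=
    funext fun x ↦ propext ⟨fun hδ ↦ hδ.congr h, fun hε ↦ hε.congr ((dvd_sub_comm).mp h)⟩
  rw [primeCubicSymbol, this, primeCubicSymbol]

lemma cubicSymbol_one_right (δ : EisensteinInt) : cubicSymbol δ 1 = 1 := by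
  simp [cubicSymbol]

lemma cubicSymbol_prime (δ : EisensteinInt) (hp : p.Prime) :
    cubicSymbol δ p = primeCubicSymbol δ p := by
  simp [cubicSymbol, Nat.primeFactorsList_prime hp]

lemma cubicSymbol_congr (h : (n : EisensteinInt) ∣ δ - ε) : cubicSymbol δ n = cubicSymbol ε n := by
  refine congrArg List.prod (List.map_congr_left fun p hp ↦ primeCubicSymbol_congr (.trans ?_ h))
  exact Nat.cast_dvd_cast (Nat.dvd_of_mem_primeFactorsList hp)

lemma IsCubicResidueChar.cubicSymbol_eq {m : ℕ} {χ : DirichletCharacter EisensteinInt m}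
    (hχ : IsCubicResidueChar δ χ) (hm : δ.norm = m) (hn0 : n ≠ 0) (hn3 : ¬ 3 ∣ n)
    (hnm : n.Coprime m) : cubicSymbol δ n = χ n := by
  conv_rhs => rw [← Nat.prod_primeFactorsList hn0, Nat.cast_list_prod, map_list_prod, List.map_map]
  refine congrArg List.prod (List.map_congr_left fun p hp ↦ ?_)
  have hp' := Nat.prime_of_mem_primeFactorsList hp
  have hpn := Nat.dvd_of_mem_primeFactorsList hp
  have hp3 : p ≠ 3 := by rintro rfl; exact hn3 hpn
  have hpm : ¬ p ∣ m := hp'.coprime_iff_not_dvd.mp (hnm.coprime_dvd_left hpn)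
  exact (hχ.hasCubicSymbol p hp' hp3 hpm).primeCubicSymbol_eq hp' hp3
    (by rw [hm]; exact_mod_cast hpm)

end CubicSymbol

/-- The binary quadratic form `a x² + b x y + c y²`. -/
@[ext]
structure BinaryForm where
  a : ℤ
  b : ℤ
  c : ℤ

namespace BinaryForm

/-- The discriminant of a binary quadratic form. -/
def disc (f : BinaryForm) : ℤ :=
  f.b ^ 2 - 4 * f.a * f.c

/-- `f` represents `n`, not necessarily primitively. -/
def Represents (f : BinaryForm) (n : ℤ) : Prop :=
  ∃ x y : ℤ, f.a * x ^ 2 + f.b * x * y + f.c * y ^ 2 = n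

/-- The form `f(x + k y, y)`. -/
def translate (f : BinaryForm) (k : ℤ) : BinaryForm :=
  ⟨f.a, f.b + 2 * f.a * k, f.a * k ^ 2 + f.b * k + f.c⟩

/-- The form `f(-y, x)`. -/
def swap (f : BinaryForm) : BinaryForm :=
  ⟨f.c, -f.b, f.a⟩

/-- Gauss's reduction condition, without the tie-breaking sign of `b`. -/
def IsReduced (f : BinaryForm) : Prop :=
  |f.b| ≤ f.a ∧ f.a ≤ f.c

variable {f : BinaryForm} {n : ℤ}

lemma disc_translate (f : BinaryForm) (k : ℤ) : (f.translate k).disc = f.disc := by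
  simp only [disc, translate]
  ring

lemma disc_swap (f : BinaryForm) : f.swap.disc = f.disc := by
  simp only [disc, swap]
  ring

lemma c_pos (hd : f.disc < 0) (ha : 0 < f.a) : 0 < f.c := by
  rw [disc] at hd
  nlinarith [sq_nonneg f.b]

lemma represents_a (f : BinaryForm) : f.Represents f.a :=
  ⟨1, 0, by ring⟩

lemma Represents.translate (h : f.Represents n) (k : ℤ) : (f.translate k).Represents n := by
  obtain ⟨x, y, rfl⟩ := h
  exact ⟨x - k * y, y, by simp only [BinaryForm.translate]; ring⟩

lemma Represents.swap (h : f.Represents n) : f.swap.Represents n := by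
  obtain ⟨x, y, rfl⟩ := h
  exact ⟨y, -x, by simp only [BinaryForm.swap]; ring⟩

-- The relation `S = T⁻¹ (S T⁻¹)²` in the modular group.
lemma swap_eq_translate_swap (f : BinaryForm) :
    f.swap = (((f.translate (-1)).swap.translate (-1)).swap).translate (-1) := by
  ext <;> simp only [swap, translate] <;> ring

lemma exists_abs_b_translate_le (ha : 0 < f.a) : ∃ k, |(f.translate k).b| ≤ f.a := by
  have hpos : 0 < 2 * f.a := by omega
  refine ⟨-((f.b + f.a) / (2 * f.a)), ?_⟩
  have hlo := Int.emod_nonneg (f.b + f.a) hpos.ne'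
  have hhi := Int.emod_lt_of_pos (f.b + f.a) hpos
  rw [Int.emod_def] at hlo hhi
  rw [abs_le]
  constructor <;> simp only [translate] <;> linarith

theorem reduction_induction {P : BinaryForm → Prop} (hred : ∀ f, f.IsReduced → P f)
    (htranslate : ∀ f k, P (f.translate k) → P f) (hswap : ∀ f, P f.swap → P f)
    (f : BinaryForm) (hd : f.disc < 0) (ha : 0 < f.a) : P f := by
  induction h : f.a.toNat using Nat.strong_induction_on generalizing f with
  | _ m ih =>
    obtain ⟨k, hk⟩ := exists_abs_b_translate_le ha
    refine htranslate f k ?_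
    by_cases hc : f.a ≤ (f.translate k).c
    · exact hred _ ⟨hk, hc⟩
    have hd' : (f.translate k).disc < 0 := by rwa [disc_translate]
    have hc0 : 0 < (f.translate k).c := c_pos hd' ha
    refine hswap _ (ih _ ?_ (f.translate k).swap (by rwa [disc_swap]) hc0 rfl)
    simp only [swap]
    omega

section DiscNegThirtyOne

/-- The Eisenstein integer `(b + 3 √-3) / 2`, of norm `(b ^ 2 + 27) / 4`, attached to a form
with odd middle coefficient; in the basis `1, ω` its first coordinate is `(b + 3) / 2`. -/
def toEisenstein (f : BinaryForm) : EisensteinInt :=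
  ⟨(f.b + 3) / 2, 3⟩

/-- The class invariant separating the principal class among the forms of discriminant `-31`. -/
noncomputable def cubicInvariant (f : BinaryForm) : EisensteinInt :=
  cubicSymbol f.toEisenstein f.a.natAbs

lemma odd_b (hd : f.disc = -31) : Odd f.b := by
  have : Odd (f.b ^ 2) := ⟨2 * f.a * f.c - 16, by rw [disc] at hd; linarith⟩
  exact Int.odd_pow' two_ne_zero |>.mp this

lemma toEisenstein_swap (hb : Odd f.b) : f.swap.toEisenstein = -star f.toEisenstein := by
  obtain ⟨r, hr⟩ := hb
  ext
  · simp only [toEisenstein, swap, hr, neg_add_rev, star_mk, neg_mul, one_mul, neg_mk, neg_neg]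
    omega
  · simp [toEisenstein]

lemma norm_toEisenstein (hd : f.disc = -31) : f.toEisenstein.norm = f.a * f.c - 1 := by
  obtain ⟨r, hr⟩ := odd_b hd
  have hre : (f.b + 3) / 2 = r + 2 := by omega
  rw [disc, hr] at hd
  rw [EisensteinInt.norm_eq, toEisenstein, hre]
  linarith

lemma not_three_dvd_a (hd : f.disc = -31) : ¬ 3 ∣ f.a := by
  rintro ⟨t, ht⟩
  rw [disc, ht] at hd
  have hsq : f.b ^ 2 = 3 * (4 * t * f.c - 11) + 2 := by linarith
  have : f.b ^ 2 % 3 = 2 := by omega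
  rcases (by omega : f.b % 3 = 0 ∨ f.b % 3 = 1 ∨ f.b % 3 = 2) with h | h | h <;>
    simp [pow_two, Int.mul_emod, h] at this

lemma isPrimary_toEisenstein (hd : f.disc = -31) (hb : ¬ 3 ∣ f.b) :
    f.toEisenstein.IsPrimary := by
  obtain ⟨r, hr⟩ := odd_b hd
  refine ⟨dvd_rfl, ?_⟩
  simp only [toEisenstein]
  omega

lemma natAbs_a_dvd_toEisenstein_translate_sub (f : BinaryForm) (k : ℤ) :
    (f.a.natAbs : EisensteinInt) ∣ (f.translate k).toEisenstein - f.toEisenstein := by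
  have : (f.b + 2 * f.a * k + 3) / 2 = (f.b + 3) / 2 + f.a * k := by
    rw [← Int.add_mul_ediv_left _ _ two_ne_zero]
    ring_nf
  exact EisensteinInt.natCast_dvd_iff.mpr (by simp [toEisenstein, translate, this])

lemma cubicInvariant_translate (f : BinaryForm) (k : ℤ) :
    (f.translate k).cubicInvariant = f.cubicInvariant :=
  cubicSymbol_congr (natAbs_a_dvd_toEisenstein_translate_sub f k)

lemma cubicInvariant_swap_of_not_dvd (hd : f.disc = -31) (ha : 0 < f.a) (hb : ¬ 3 ∣ f.b) :
    f.swap.cubicInvariant = f.cubicInvariant := by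
  have hc : 0 < f.c := c_pos (by omega) ha
  have hnorm := norm_toEisenstein hd
  obtain ⟨m, hm⟩ := Int.eq_ofNat_of_zero_le (EisensteinInt.norm_nonneg f.toEisenstein)
  obtain ⟨χ, hχ⟩ := (isPrimary_toEisenstein hd hb).exists_isCubicResidueChar hm
  have hac : f.a.natAbs * f.c.natAbs = m + 1 := by
    zify
    rw [abs_of_pos ha, abs_of_pos hc]
    linarith
  have hcop : (m + 1).Coprime m := by simp
  have ha' : cubicSymbol f.toEisenstein f.a.natAbs = χ f.a.natAbs :=
    hχ.cubicSymbol_eq hm (by omega) (by have := not_three_dvd_a hd; omega)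
      (hcop.coprime_dvd_left ⟨_, hac.symm⟩)
  have hc' : cubicSymbol f.swap.toEisenstein f.c.natAbs = (χ ^ 2) f.c.natAbs := by
    have h3 : ¬ 3 ∣ f.c := not_three_dvd_a (f := f.swap) (by rwa [disc_swap])
    rw [toEisenstein_swap (odd_b hd)]
    refine hχ.star.neg.cubicSymbol_eq ?_ (by omega) (by omega)
      (hcop.coprime_dvd_left ⟨_, by rw [← hac, mul_comm]⟩)
    rw [QuadraticAlgebra.norm_neg, QuadraticAlgebra.norm_star, hm]
  have hχac : χ f.a.natAbs * χ f.c.natAbs = 1 := by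
    rw [← map_mul, ← Nat.cast_mul, hac]
    simp
  have hχc : χ f.c.natAbs ^ 3 = 1 := by
    have : IsUnit (f.c.natAbs : ZMod m) :=
      (ZMod.isUnit_iff_coprime _ _).mpr (hcop.coprime_dvd_left ⟨_, by rw [← hac, mul_comm]⟩)
    exact mulChar_apply_pow_eq_one hχ.pow_three_eq_one three_ne_zero this
  calc f.swap.cubicInvariant = χ f.c.natAbs ^ 2 := by
        rw [← MulChar.pow_apply' _ two_ne_zero]
        exact hc'
    _ = χ f.a.natAbs := by linear_combination χ f.a.natAbs * hχc - χ f.c.natAbs ^ 2 * hχac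
    _ = f.cubicInvariant := ha'.symm

lemma cubicInvariant_swap (hd : f.disc = -31) (ha : 0 < f.a) :
    f.swap.cubicInvariant = f.cubicInvariant := by
  by_cases hb : 3 ∣ f.b
  · set g := (f.translate (-1)).swap.translate (-1) with hg
    have hd' : (f.translate (-1)).disc = -31 := by rwa [disc_translate]
    have hgd : g.disc = -31 := by rwa [hg, disc_translate, disc_swap]
    have hga : 0 < g.a := c_pos (f := f.translate (-1)) (by omega) ha
    have hb' : ¬ 3 ∣ (f.translate (-1)).b := by
      have := not_three_dvd_a hd
      simp only [translate]
      omega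
    have hgb : ¬ 3 ∣ g.b := by
      have : ¬ 3 ∣ f.c := not_three_dvd_a (f := f.swap) (by rwa [disc_swap])
      simp only [hg, translate, swap]
      omega
    rw [swap_eq_translate_swap, cubicInvariant_translate, ← hg,
      cubicInvariant_swap_of_not_dvd hgd hga hgb, hg, cubicInvariant_translate,
      cubicInvariant_swap_of_not_dvd hd' ha hb', cubicInvariant_translate]
  · exact cubicInvariant_swap_of_not_dvd hd ha hb

lemma IsReduced.eq_of_disc_eq_neg_thirtyOne (h : f.IsReduced) (hd : f.disc = -31) :
    (f.a = 1 ∧ (f.b = 1 ∨ f.b = -1) ∧ f.c = 8) ∨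
      (f.a = 2 ∧ (f.b = 1 ∨ f.b = -1) ∧ f.c = 4) := by
  obtain ⟨r, hr⟩ := odd_b hd
  have h3 := not_three_dvd_a hd
  obtain ⟨hba, hac⟩ := h
  rw [disc] at hd
  have ha0 : f.a ≠ 0 := by
    rintro ha
    rw [ha] at hd
    linarith [sq_nonneg f.b]
  have hb2 : f.b ^ 2 ≤ f.a ^ 2 := sq_le_sq.mpr (hba.trans (le_abs_self f.a))
  rw [abs_le] at hba
  have ha3 : f.a ≤ 3 := by nlinarith
  obtain ha | ha : f.a = 1 ∨ f.a = 2 := by omega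
  all_goals
    have hb : f.b = 1 ∨ f.b = -1 := by omega
    rcases hb with hb | hb <;> norm_num [ha, hb] at hd ⊢ <;> omega

lemma hasCubicSymbol_toEisenstein_two (hb : f.b = 1 ∨ f.b = -1) :
    ∃ x, x ≠ 1 ∧ HasCubicSymbol f.toEisenstein 2 x := by
  have hω := EisensteinInt.isPrimitiveRoot_omega
  rcases hb with hb | hb
  · refine ⟨ω, hω.ne_one (by simp), hω.pow_eq_one, EisensteinInt.natCast_dvd_iff.mpr ?_⟩
    simp [toEisenstein, hb, pow_two]
  · refine ⟨ω ^ 2, hω.pow_ne_one_of_pos_of_lt (by simp) (by simp), ?_,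
      EisensteinInt.natCast_dvd_iff.mpr ?_⟩
    · rw [pow_right_comm, hω.pow_eq_one, one_pow]
    · simp [toEisenstein, hb, pow_two]

lemma not_dvd_norm_toEisenstein (hd : f.disc = -31) {p : ℕ} (hp : p.Prime) (hpa : f.a = p) :
    ¬ (p : ℤ) ∣ f.toEisenstein.norm := by
  intro h
  rw [norm_toEisenstein hd, hpa, dvd_sub_right (dvd_mul_right _ _)] at h
  exact (Nat.prime_iff_prime_int.mp hp).not_dvd_one h

lemma cubicInvariant_eq_of_hasCubicSymbol (hd : f.disc = -31) {p : ℕ} (hp : p.Prime)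
    (hpa : f.a = p) {ξ : EisensteinInt} (hξ : HasCubicSymbol f.toEisenstein p ξ) :
    f.cubicInvariant = ξ := by
  have hp3 : p ≠ 3 := by
    rintro rfl
    exact not_three_dvd_a hd (by simp [hpa])
  rw [cubicInvariant, hpa, Int.natAbs_natCast, cubicSymbol_prime _ hp]
  exact hξ.primeCubicSymbol_eq hp hp3 (not_dvd_norm_toEisenstein hd hp hpa)

lemma map_toEisenstein_mul_map_star {R : Type*} [CommRing R] {p : ℕ} [CharP R p]
    (φ : EisensteinInt →+* R) (hd : f.disc = -31) (hpa : f.a = p) :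
    φ f.toEisenstein * φ (star f.toEisenstein) = -1 := by
  rw [← map_mul, EisensteinInt.mul_star, map_intCast, norm_toEisenstein hd, hpa]
  simp

lemma cubicInvariant_ne_one_of_a_eq_two (hd : f.disc = -31) (ha : f.a = 2)
    (hb : f.b = 1 ∨ f.b = -1) : f.cubicInvariant ≠ 1 := by
  obtain ⟨x, hx1, hx⟩ := hasCubicSymbol_toEisenstein_two hb
  rwa [cubicInvariant_eq_of_hasCubicSymbol hd Nat.prime_two (by simp [ha]) hx]

lemma Represents.neg_b (h : f.Represents n) : (⟨f.a, -f.b, f.c⟩ : BinaryForm).Represents n := by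
  obtain ⟨x, y, rfl⟩ := h
  exact ⟨-x, y, by ring⟩

theorem cubicInvariant_dichotomy (hd : f.disc = -31) (ha : 0 < f.a) :
    (f.cubicInvariant = 1 ∧ ∀ n, f.Represents n → Represents ⟨1, 1, 8⟩ n) ∨
      (f.cubicInvariant ≠ 1 ∧ ∀ n, f.Represents n → Represents ⟨2, 1, 4⟩ n) := by
  have hneg : f.disc < 0 := by omega
  refine reduction_induction (P := fun f ↦ f.disc = -31 → 0 < f.a →
    (f.cubicInvariant = 1 ∧ ∀ n, f.Represents n → Represents ⟨1, 1, 8⟩ n) ∨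
      (f.cubicInvariant ≠ 1 ∧ ∀ n, f.Represents n → Represents ⟨2, 1, 4⟩ n))
    (fun f hf hd _ ↦ ?_) (fun f k h hd ha ↦ ?_) (fun f h hd ha ↦ ?_) f hneg ha hd ha
  · have hrep {a c : ℤ} (ha : f.a = a) (hb : f.b = 1 ∨ f.b = -1) (hc : f.c = c) (n : ℤ)
        (h : f.Represents n) : Represents ⟨a, 1, c⟩ n := by
      subst ha hc
      rcases hb with hb | hb
      · simpa [← hb] using h
      · simpa [hb] using h.neg_b
    rcases hf.eq_of_disc_eq_neg_thirtyOne hd with ⟨ha, hb, hc⟩ | ⟨ha, hb, hc⟩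
    · exact .inl ⟨by simp [cubicInvariant, ha, cubicSymbol_one_right], hrep ha hb hc⟩
    · exact .inr ⟨cubicInvariant_ne_one_of_a_eq_two hd ha hb, hrep ha hb hc⟩
  · rw [disc_translate, cubicInvariant_translate] at h
    exact (h hd ha).imp (.imp_right fun h n hn ↦ h n (hn.translate k))
      (.imp_right fun h n hn ↦ h n (hn.translate k))
  · rw [disc_swap, cubicInvariant_swap hd ha] at h
    have hc : 0 < f.c := c_pos (by omega) ha
    exact (h hd hc).imp (.imp_right fun h n hn ↦ h n hn.swap)
      (.imp_right fun h n hn ↦ h n hn.swap)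

lemma exists_hasCubicSymbol_toEisenstein_of_not_dvd (hd : f.disc = -31) (hb : ¬ 3 ∣ f.b) {p : ℕ}
    (hp : p.Prime) (hpa : f.a = p) : ∃ x, HasCubicSymbol f.toEisenstein p x := by
  have h3a := not_three_dvd_a hd
  obtain ⟨m, hm⟩ := Int.eq_ofNat_of_zero_le (EisensteinInt.norm_nonneg f.toEisenstein)
  obtain ⟨χ, hχ⟩ := (isPrimary_toEisenstein hd hb).exists_isCubicResidueChar hm
  refine ⟨χ p, hχ.hasCubicSymbol p hp (by rintro rfl; simp [hpa] at h3a) ?_⟩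
  have := not_dvd_norm_toEisenstein hd hp hpa
  rw [hm] at this
  exact_mod_cast this

lemma exists_hasCubicSymbol_toEisenstein (hd : f.disc = -31) {p : ℕ} (hp : p.Prime)
    (hpa : f.a = p) : ∃ x, HasCubicSymbol f.toEisenstein p x := by
  by_cases hb : 3 ∣ f.b
  · have hb' : ¬ 3 ∣ (f.translate 1).b := by
      have := not_three_dvd_a hd
      simp only [translate]
      omega
    obtain ⟨x, hx⟩ := exists_hasCubicSymbol_toEisenstein_of_not_dvd (f := f.translate 1)
      (by rwa [disc_translate]) hb' hp hpa
    refine ⟨x, hx.congr ?_⟩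
    simpa [hpa] using natAbs_a_dvd_toEisenstein_translate_sub f 1
  · exact exists_hasCubicSymbol_toEisenstein_of_not_dvd hd hb hp hpa

end DiscNegThirtyOne

end BinaryForm

section Cardano

/-- Cardano's expression for a root of `x ^ 3 + x + 1`, where `t` is a square root of `-3` and
`y ^ 3` is a root `d` of the resolvent equation `d + d⁻¹ = 3 t`. -/
def cardanoRoot {K : Type*} [Field K] (t y : K) : K :=
  (y + y⁻¹) / t

variable {K : Type*} [Field K] {t y y' d x : K}

lemma add_inv_eq_add_inv_iff (hy : y ≠ 0) (hy' : y' ≠ 0) :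
    y + y⁻¹ = y' + y'⁻¹ ↔ y = y' ∨ y = y'⁻¹ := by
  have : y + y⁻¹ - (y' + y'⁻¹) = (y - y') * (y - y'⁻¹) * y⁻¹ := by
    field_simp
    ring
  rw [← sub_eq_zero, this]
  simp [hy, sub_eq_zero]

lemma cardanoRoot_inv (t y : K) : cardanoRoot t y⁻¹ = cardanoRoot t y := by
  rw [cardanoRoot, cardanoRoot, inv_inv, add_comm]

lemma cardanoRoot_neg_neg (t y : K) : cardanoRoot (-t) (-y) = cardanoRoot t y := by
  rw [cardanoRoot, cardanoRoot, inv_neg, ← neg_add, neg_div_neg_eq]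

lemma cardanoRoot_pow_char (p : ℕ) [Fact p.Prime] [CharP K p] (t y : K) :
    cardanoRoot t y ^ p = cardanoRoot (t ^ p) (y ^ p) := by
  rw [cardanoRoot, cardanoRoot, div_pow, add_pow_char, inv_pow]

lemma cardanoRoot_injOn (ht : t ≠ 0) (hd0 : d ≠ 0) (hd : d ≠ d⁻¹) :
    Set.InjOn (cardanoRoot t) {y | y ^ 3 = d} := by
  have hne {y : K} (hy : y ^ 3 = d) : y ≠ 0 :=
    (pow_ne_zero_iff three_ne_zero).mp (hy.trans_ne hd0)
  intro y hy y' hy' h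
  rw [cardanoRoot, cardanoRoot, div_left_inj' ht, add_inv_eq_add_inv_iff (hne hy) (hne hy')] at h
  refine h.resolve_right fun h ↦ hd ?_
  calc d = y ^ 3 := hy.symm
    _ = d⁻¹ := by rw [h, inv_pow, hy'.out]

lemma cardanoRoot_pow_three_add_self_add_one (ht : t ≠ 0) (ht2 : t ^ 2 = -3) (hy : y ≠ 0) :
    3 * t * (cardanoRoot t y ^ 3 + cardanoRoot t y + 1) = 3 * t - (y ^ 3 + (y ^ 3)⁻¹) := by
  have htz : t * cardanoRoot t y = y + y⁻¹ := mul_div_cancel₀ _ ht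
  generalize cardanoRoot t y = z at htz ⊢
  rw [← inv_pow]
  linear_combination t * z ^ 3 * ht2 - 3 * (y + y⁻¹) * mul_inv_cancel₀ hy +
    (3 - (t * z) ^ 2 - t * z * (y + y⁻¹) - (y + y⁻¹) ^ 2) * htz

lemma exists_cardanoRoot_eq [IsAlgClosed K] (ht : t ≠ 0) (x : K) :
    ∃ y ≠ 0, cardanoRoot t y = x := by
  have hdeg : (Polynomial.X ^ 2 - Polynomial.C (t * x) * Polynomial.X + 1 :
      Polynomial K).degree = 2 := by
    compute_degree!
  obtain ⟨y, hy⟩ := IsAlgClosed.exists_root _ (hdeg.trans_ne two_ne_zero)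
  have hy : y ^ 2 - t * x * y + 1 = 0 := by simpa [Polynomial.IsRoot] using hy
  have hy0 : y ≠ 0 := by
    rintro rfl
    simp at hy
  refine ⟨y, hy0, ?_⟩
  rw [cardanoRoot]
  field_simp
  linear_combination hy

lemma pow_three_add_self_add_one_eq_zero_iff [IsAlgClosed K] (h3 : (3 : K) ≠ 0) (ht2 : t ^ 2 = -3)
    (hd0 : d ≠ 0) (hd : d + d⁻¹ = 3 * t) :
    x ^ 3 + x + 1 = 0 ↔ ∃ y, y ^ 3 = d ∧ cardanoRoot t y = x := by
  have ht : t ≠ 0 := by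
    rintro rfl
    exact h3 (by simpa using ht2.symm)
  have hroot {y : K} (hy : y ≠ 0) :
      cardanoRoot t y ^ 3 + cardanoRoot t y + 1 = 0 ↔ y ^ 3 = d ∨ y ^ 3 = d⁻¹ := by
    rw [← add_inv_eq_add_inv_iff (pow_ne_zero 3 hy) hd0, hd, eq_comm (b := 3 * t),
      ← sub_eq_zero (a := 3 * t), ← cardanoRoot_pow_three_add_self_add_one ht ht2 hy,
      mul_eq_zero, or_iff_right (mul_ne_zero h3 ht)]
  constructor
  · intro hx
    obtain ⟨y, hy, rfl⟩ := exists_cardanoRoot_eq ht x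
    rcases (hroot hy).mp hx with h | h
    · exact ⟨y, h, rfl⟩
    · exact ⟨y⁻¹, by rw [inv_pow, h, inv_inv], cardanoRoot_inv t y⟩
  · rintro ⟨y, hy, rfl⟩
    exact (hroot ((pow_ne_zero_iff three_ne_zero).mp (hy.trans_ne hd0))).mpr (.inl hy)

lemma resolvent_ne_inv (h31 : (31 : K) ≠ 0) (ht2 : t ^ 2 = -3) (hd0 : d ≠ 0)
    (hd : d + d⁻¹ = 3 * t) : d ≠ d⁻¹ := by
  intro h
  have hsq : d * d = 1 := (mul_eq_one_iff_eq_inv₀ hd0).mpr h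
  rw [← h] at hd
  exact h31 (by linear_combination (2 * d + 3 * t) * hd - 4 * hsq + 9 * ht2)

end Cardano

section Frobenius

variable {K : Type*} [Field K] {p : ℕ} [Fact p.Prime] [CharP K p] {φ : EisensteinInt →+* K}
  {δ ξ : EisensteinInt} {y : K}

lemma HasCubicSymbol.map_pow_eq (hξ : HasCubicSymbol δ p ξ) (hp2 : p ≠ 2) (hp3 : p ≠ 3)
    (hδ : φ δ * φ (star δ) = -1) : φ δ ^ ((p + 1) / 3 * 2) = φ ξ ^ p := by
  have hp := (Fact.out : p.Prime)
  have hmod := mt (Nat.prime_dvd_prime_iff_eq Nat.prime_three hp).mp hp3.symm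
  have heven : Even ((p + 1) / 3) := by
    have := hp.eq_two_or_odd
    rw [Nat.even_iff]
    omega
  have hmul : φ δ ^ ((p + 1) / 3) * φ (star δ) ^ ((p + 1) / 3) = 1 := by
    rw [← mul_pow, hδ, heven.neg_one_pow]
  have hsymbol : φ δ ^ ((p + 1) / 3) - φ ξ ^ p * φ (star δ) ^ ((p + 1) / 3) = 0 := by
    have := map_dvd φ hξ.2
    rwa [map_natCast, CharP.cast_eq_zero, zero_dvd_iff, map_sub, map_mul, map_pow, map_pow,
      map_pow] at this
  rw [pow_mul]
  linear_combination φ δ ^ ((p + 1) / 3) * hsymbol + φ ξ ^ p * hmul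

lemma HasCubicSymbol.pow_char_of_mod_three_eq_one (hξ : HasCubicSymbol δ p ξ) (hp2 : p ≠ 2)
    (hp1 : p % 3 = 1) (hδ : φ δ * φ (star δ) = -1) (hy : y ^ 3 = φ δ) :
    y ^ p = (φ ξ)⁻¹ * y := by
  obtain ⟨e, rfl⟩ : ∃ e, p = 3 * e + 1 := ⟨p / 3, by omega⟩
  have hδ0 : φ δ ≠ 0 := left_ne_zero_of_mul (hδ.trans_ne (neg_ne_zero.mpr one_ne_zero))
  have hpow : φ δ ^ (3 * e) = 1 := by
    have := EisensteinInt.map_pow_char_of_mod_three_eq_one φ hp1 δ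
    rwa [pow_succ, mul_eq_right₀ hδ0] at this
  have hsq : φ δ ^ (e * 2) = φ ξ := by
    have := hξ.map_pow_eq hp2 (by omega) hδ
    rwa [EisensteinInt.map_pow_char_of_mod_three_eq_one φ hp1,
      show (3 * e + 1 + 1) / 3 = e by omega] at this
  have hinv : φ δ ^ e = (φ ξ)⁻¹ := by
    refine eq_inv_of_mul_eq_one_left ?_
    rw [← hsq, ← pow_add, ← hpow]
    ring_nf
  rw [pow_succ, pow_mul, hy, hinv]

lemma HasCubicSymbol.pow_char_of_mod_three_eq_two (hξ : HasCubicSymbol δ p ξ) (hp2 : p ≠ 2)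
    (hp1 : p % 3 = 2) (hδ : φ δ * φ (star δ) = -1) (hy : y ^ 3 = φ δ) :
    y ^ p = -((φ ξ)⁻¹ * y)⁻¹ := by
  obtain ⟨e, he⟩ : ∃ e, p + 1 = 3 * e := ⟨(p + 1) / 3, by omega⟩
  have hδ0 : φ δ ≠ 0 := left_ne_zero_of_mul (hδ.trans_ne (neg_ne_zero.mpr one_ne_zero))
  have hy0 : y ≠ 0 := (pow_ne_zero_iff three_ne_zero).mp (hy.trans_ne hδ0)
  have hξ3 : φ ξ ^ 3 = 1 := by rw [← map_pow, hξ.1, map_one]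
  have hpow : φ δ ^ (e * 3) = -1 := by
    rw [mul_comm, ← he, pow_succ, EisensteinInt.map_pow_char_of_mod_three_eq_two φ hp1, mul_comm,
      hδ]
  have hsq : φ δ ^ (e * 2) = φ ξ ^ 2 := by
    have := hξ.map_pow_eq hp2 (by omega) hδ
    rwa [EisensteinInt.map_pow_char_of_mod_three_eq_two φ hp1,
      EisensteinInt.star_eq_sq_of_pow_three_eq_one hξ.1, map_pow, he,
      Nat.mul_div_cancel_left _ three_pos] at this
  have hneg : φ δ ^ e = -φ ξ := by
    rw [pow_mul] at hpow hsq
    linear_combination φ ξ * hpow - φ ξ * φ δ ^ e * hsq - φ δ ^ e * hξ3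
  rw [mul_inv, inv_inv, ← neg_mul, ← hneg, eq_mul_inv_iff_mul_eq₀ hy0, ← pow_succ, he, pow_mul, hy]

lemma HasCubicSymbol.cardanoRoot_pow_char (hξ : HasCubicSymbol δ p ξ) (hp2 : p ≠ 2) (hp3 : p ≠ 3)
    (hδ : φ δ * φ (star δ) = -1) (hy : y ^ 3 = φ δ) :
    cardanoRoot (φ .sqrtNegThree) y ^ p = cardanoRoot (φ .sqrtNegThree) ((φ ξ)⁻¹ * y) := by
  rw [_root_.cardanoRoot_pow_char]
  obtain hp1 | hp1 : p % 3 = 1 ∨ p % 3 = 2 := by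
    have := mt (Nat.prime_dvd_prime_iff_eq Nat.prime_three Fact.out).mp hp3.symm
    omega
  · rw [hξ.pow_char_of_mod_three_eq_one hp2 hp1 hδ hy,
      EisensteinInt.map_pow_char_of_mod_three_eq_one φ hp1]
  · rw [hξ.pow_char_of_mod_three_eq_two hp2 hp1 hδ hy,
      EisensteinInt.map_pow_char_of_mod_three_eq_two φ hp1, EisensteinInt.star_sqrtNegThree,
      map_neg, cardanoRoot_neg_neg, cardanoRoot_inv]

lemma map_add_inv_map_eq_of_im_eq_three (hδ : φ δ * φ (star δ) = -1) (him : δ.im = 3) :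
    φ δ + (φ δ)⁻¹ = 3 * φ .sqrtNegThree := by
  have hinv : (φ δ)⁻¹ = -φ (star δ) :=
    inv_eq_of_mul_eq_one_right (by linear_combination -hδ)
  rw [hinv, ← sub_eq_add_neg, ← map_sub, EisensteinInt.sub_star, him, map_mul, map_intCast]
  norm_num

-- Frobenius moves the Cardano root at `y` to the one at `ξ⁻¹ y`, so it fixes all the roots exactly
-- when the cubic symbol `ξ` is trivial.
lemma HasCubicSymbol.forall_pow_char_eq_iff [IsAlgClosed K] (hξ : HasCubicSymbol δ p ξ)
    (hp2 : p ≠ 2) (hp3 : p ≠ 3) (h31 : (31 : K) ≠ 0) (hδ : φ δ * φ (star δ) = -1)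
    (him : δ.im = 3) : (∀ x : K, x ^ 3 + x + 1 = 0 → x ^ p = x) ↔ φ ξ = 1 := by
  have h3 : (3 : K) ≠ 0 := by exact_mod_cast (EisensteinInt.neZero_three Fact.out hp3).out
  have hδ0 : φ δ ≠ 0 := left_ne_zero_of_mul (hδ.trans_ne (neg_ne_zero.mpr one_ne_zero))
  have ht2 := EisensteinInt.map_sqrtNegThree_sq φ
  have ht : φ .sqrtNegThree ≠ 0 := by
    intro h
    simp [h, h3] at ht2
  have hresolvent := map_add_inv_map_eq_of_im_eq_three hδ him
  have hroots (x : K) := pow_three_add_self_add_one_eq_zero_iff (x := x) h3 ht2 hδ0 hresolvent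
  constructor
  · intro h
    obtain ⟨y, hy⟩ := IsAlgClosed.exists_pow_nat_eq (φ δ) three_pos
    have hy0 : y ≠ 0 := (pow_ne_zero_iff three_ne_zero).mp (hy.trans_ne hδ0)
    have hξy : ((φ ξ)⁻¹ * y) ^ 3 = φ δ := by
      rw [mul_pow, inv_pow, ← map_pow, hξ.1, map_one, inv_one, one_mul, hy]
    have hfix := h _ ((hroots _).mpr ⟨y, hy, rfl⟩)
    rw [hξ.cardanoRoot_pow_char hp2 hp3 hδ hy] at hfix
    have := cardanoRoot_injOn ht hδ0 (resolvent_ne_inv h31 ht2 hδ0 hresolvent) hξy hy hfix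
    exact inv_eq_one.mp ((mul_eq_right₀ hy0).mp this)
  · intro h x hx
    obtain ⟨y, hy, rfl⟩ := (hroots x).mp hx
    rw [hξ.cardanoRoot_pow_char hp2 hp3 hδ hy, h, inv_one, one_mul]

end Frobenius

section Splitting

open Polynomial

lemma splits_iff_forall_pow_char_eq {p : ℕ} [Fact p.Prime] (K : Type*) [Field K] [IsAlgClosed K]
    [Algebra (ZMod p) K] {P : (ZMod p)[X]} (hP : P ≠ 0) :
    P.Splits ↔ ∀ x : K, aeval x P = 0 → x ^ p = x := by
  have : CharP K p := charP_of_injective_algebraMap (algebraMap (ZMod p) K).injective p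
  constructor
  · intro h x hx
    obtain ⟨a, rfl⟩ := h.mem_range_of_isRoot hP (i := algebraMap (ZMod p) K) (x := x)
      (by rwa [IsRoot, eval_map_algebraMap])
    rw [← map_pow, ZMod.pow_card]
  · intro h
    refine .of_splits_map (algebraMap (ZMod p) K) (IsAlgClosed.splits _) fun x hx ↦ ?_
    refine (bot_le : (⊥ : Subfield K) ≤ (algebraMap (ZMod p) K).fieldRange)
      ((Subfield.mem_bot_iff_pow_eq_self K p).mpr (h x ?_))
    rw [← eval_map_algebraMap]
    exact (mem_roots'.mp hx).2

lemma splits_iff_card_filter_eq_three {F : Type*} [Field F] [Fintype F] [DecidableEq F]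
    {P : Cubic F} (ha : P.a ≠ 0) (hP : P.discr ≠ 0) :
    P.toPoly.Splits ↔
      (Finset.univ.filter fun x ↦ P.a * x ^ 3 + P.b * x ^ 2 + P.c * x + P.d = 0).card = 3 := by
  have hroots : P.roots.toFinset =
      Finset.univ.filter fun x ↦ P.a * x ^ 3 + P.b * x ^ 2 + P.c * x + P.d = 0 := by
    ext x
    simp [Cubic.mem_roots_iff (Cubic.ne_zero_of_a_ne_zero ha)]
  rw [← hroots]
  constructor
  · intro h
    simpa [Cubic.roots, Cubic.map_toPoly] using
      Cubic.card_roots_of_discr_ne_zero (φ := RingHom.id F) ha (by simpa using h) hP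
  · intro h
    have hcard : P.roots.card = 3 := by
      refine le_antisymm ?_ (h ▸ Multiset.toFinset_card_le _)
      exact (card_roots' _).trans (Cubic.natDegree_of_a_ne_zero ha).le
    rw [splits_iff_card_roots, Cubic.natDegree_of_a_ne_zero ha]
    exact hcard

lemma isSquare_discr_of_splits {F : Type*} [Field F] {P : Cubic F} (ha : P.a ≠ 0)
    (h : P.toPoly.Splits) : IsSquare P.discr := by
  obtain ⟨x, y, z, hroots⟩ := (Cubic.splits_iff_roots_eq_three (φ := RingHom.id F) ha).mp
    (by simpa using h)
  rw [isSquare_iff_exists_sq]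
  exact ⟨_, Cubic.discr_eq_prod_three_roots ha hroots⟩

/-- Kronecker's cubic `x ^ 3 + x + 1`, of discriminant `-31`. -/
def kroneckerCubic (R : Type*) [CommRing R] : Cubic R :=
  ⟨1, 0, 1, 1⟩

lemma discr_kroneckerCubic (R : Type*) [CommRing R] : (kroneckerCubic R).discr = -31 := by
  simp only [kroneckerCubic, Cubic.discr]
  norm_num

variable {p : ℕ} [Fact p.Prime]

lemma splits_kroneckerCubic_iff_card (hp31 : p ≠ 31) :
    (kroneckerCubic (ZMod p)).toPoly.Splits ↔
      (Finset.univ.filter fun a : ZMod p ↦ a ^ 3 + a + 1 = 0).card = 3 := by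
  have h31 : (kroneckerCubic (ZMod p)).discr ≠ 0 := by
    rw [discr_kroneckerCubic, neg_ne_zero]
    have : ¬ p ∣ 31 := mt (Nat.prime_dvd_prime_iff_eq Fact.out (by norm_num)).mp hp31
    exact mt (ZMod.natCast_eq_zero_iff 31 p).mp this
  simpa [kroneckerCubic] using splits_iff_card_filter_eq_three one_ne_zero h31

theorem splits_kroneckerCubic_iff_cubicInvariant {f : BinaryForm} (hd : f.disc = -31)
    (hpa : f.a = p) (hp2 : p ≠ 2) (hp31 : p ≠ 31) :
    (kroneckerCubic (ZMod p)).toPoly.Splits ↔ f.cubicInvariant = 1 := by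
  have hp := (Fact.out : p.Prime)
  have hp3 : p ≠ 3 := by
    rintro rfl
    exact BinaryForm.not_three_dvd_a hd (by simp [hpa])
  let K := AlgebraicClosure (ZMod p)
  have hK3 := EisensteinInt.neZero_three (K := K) hp hp3
  obtain ⟨φ⟩ := EisensteinInt.exists_ringHom K
  obtain ⟨ξ, hξ⟩ := BinaryForm.exists_hasCubicSymbol_toEisenstein hd hp hpa
  have hφξ : φ ξ = 1 ↔ ξ = 1 := by
    rw [← map_one φ, (EisensteinInt.map_injOn_cubeRoots φ).eq_iff hξ.1 (one_pow 3)]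
  have h31 : (31 : K) ≠ 0 := fun h ↦ hp31 <| (Nat.prime_dvd_prime_iff_eq hp (by norm_num)).mp <|
    (CharP.cast_eq_zero_iff K p 31).mp (by exact_mod_cast h)
  rw [BinaryForm.cubicInvariant_eq_of_hasCubicSymbol hd hp hpa hξ, ← hφξ,
    splits_iff_forall_pow_char_eq K (Cubic.ne_zero_of_a_ne_zero one_ne_zero)]
  simpa [kroneckerCubic, Cubic.toPoly] using hξ.forall_pow_char_eq_iff hp2 hp3 h31
    (BinaryForm.map_toEisenstein_mul_map_star φ hd hpa) (by simp [BinaryForm.toEisenstein])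

end Splitting

section Representation

variable {p : ℕ} {D m n : ℤ}

lemma exists_eq_sq_add_mul_sq_of_mul (hp : p.Prime) (hn : ∃ x y, (p : ℤ) = x ^ 2 + D * y ^ 2)
    (hm : ∃ u v, m * p = u ^ 2 + D * v ^ 2) : ∃ s t, m = s ^ 2 + D * t ^ 2 := by
  have hpp := Nat.prime_iff_prime_int.mp hp
  obtain ⟨x, y, hxy⟩ := hn
  obtain ⟨u, v, huv⟩ := hm
  wlog hdvd : (p : ℤ) ∣ u * y - x * v generalizing y
  · have hprod : (p : ℤ) ∣ (u * y - x * v) * (u * -y - x * v) :=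
      ⟨v ^ 2 - m * y ^ 2, by linear_combination y ^ 2 * huv - v ^ 2 * hxy⟩
    exact this (-y) (by rw [hxy]; ring) ((hpp.dvd_or_dvd hprod).resolve_left hdvd)
  obtain ⟨t, ht⟩ := hdvd
  have hbrahmagupta : m * p ^ 2 = (x * u + D * y * v) ^ 2 + D * (p * t) ^ 2 := by
    rw [← ht]
    linear_combination p * huv + (u ^ 2 + D * v ^ 2) * hxy
  have hdvd' : (p : ℤ) ∣ x * u + D * y * v :=
    hpp.dvd_of_dvd_pow (n := 2) ⟨m * p - D * p * t ^ 2, by linear_combination -hbrahmagupta⟩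
  obtain ⟨s, hs⟩ := hdvd'
  refine ⟨s, t, mul_left_cancel₀ (pow_ne_zero 2 hpp.ne_zero) ?_⟩
  rw [hs] at hbrahmagupta
  linear_combination hbrahmagupta

lemma eight_ne_sq_add_thirtyOne_mul_sq (s t : ℤ) : 8 ≠ s ^ 2 + 31 * t ^ 2 := by
  intro h
  obtain rfl : t = 0 := by
    by_contra ht
    have := sq_pos_of_ne_zero ht
    nlinarith [sq_nonneg s]
  have hs : s ≤ 2 := by nlinarith
  have hs' : -2 ≤ s := by nlinarith
  interval_cases s <;> omega

lemma not_represents_of_eq_sq_add (hp : p.Prime) (h : ∃ x y, (p : ℤ) = x ^ 2 + 31 * y ^ 2) :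
    ¬ BinaryForm.Represents ⟨2, 1, 4⟩ p := by
  rintro ⟨x, y, hxy⟩
  obtain ⟨s, t, hst⟩ := exists_eq_sq_add_mul_sq_of_mul (m := 8) hp h
    ⟨4 * x + y, y, by rw [← hxy]; ring⟩
  exact eight_ne_sq_add_thirtyOne_mul_sq s t hst

lemma BinaryForm.Represents.exists_eq_sq_add (hn : Odd n) (h : Represents ⟨1, 1, 8⟩ n) :
    ∃ x y, n = x ^ 2 + 31 * y ^ 2 := by
  obtain ⟨x, y, rfl⟩ := h
  have hodd : Odd (x * (x + y)) := by
    have hsub := hn.sub_even (even_two_mul (4 * y ^ 2))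
    rwa [show 1 * x ^ 2 + 1 * x * y + 8 * y ^ 2 - 2 * (4 * y ^ 2) = x * (x + y) by ring] at hsub
  have hy : Even y := by
    obtain ⟨hx, hxy⟩ := Int.odd_mul.mp hodd
    exact (Int.odd_add.mp hxy).mp hx
  obtain ⟨z, rfl⟩ := hy
  exact ⟨x + z, z, by ring⟩

lemma BinaryForm.exists_a_eq_of_isSquare [Fact p.Prime] (hp2 : p ≠ 2)
    (h : IsSquare (-31 : ZMod p)) : ∃ f : BinaryForm, f.disc = -31 ∧ f.a = p := by
  have hpodd : Odd (p : ℤ) := by exact_mod_cast (Fact.out : p.Prime).odd_of_ne_two hp2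
  obtain ⟨b, hb, hdvd⟩ : ∃ b : ℤ, Odd b ∧ (p : ℤ) ∣ b ^ 2 + 31 := by
    obtain ⟨r, hr⟩ := h
    obtain ⟨s, rfl⟩ := ZMod.intCast_surjective r
    have hroot (b : ℤ) (hb : (b : ZMod p) = s) : (p : ℤ) ∣ b ^ 2 + 31 := by
      rw [← ZMod.intCast_zmod_eq_zero_iff_dvd]
      push_cast
      linear_combination (b + s : ZMod p) * hb - hr
    rcases Int.even_or_odd s with hs | hs
    · exact ⟨s + p, hs.add_odd hpodd, hroot _ (by simp)⟩
    · exact ⟨s, hs, hroot _ rfl⟩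
  have hfour : (4 : ℤ) ∣ b ^ 2 + 31 := by
    obtain ⟨k, rfl⟩ := hb
    exact ⟨k ^ 2 + k + 8, by ring⟩
  have hcoprime : IsCoprime (4 : ℤ) p :=
    IsCoprime.pow_left (m := 2) (Int.isCoprime_two_left.mpr hpodd)
  obtain ⟨c, hc⟩ := hcoprime.mul_dvd hfour hdvd
  refine ⟨⟨p, b, c⟩, ?_, rfl⟩
  rw [BinaryForm.disc]
  linear_combination hc

lemma isSquare_neg_of_eq_sq_add_mul_sq [Fact p.Prime] (h : ∃ x y, (p : ℤ) = x ^ 2 + D * y ^ 2) :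
    IsSquare (-D : ZMod p) := by
  have hpp := Nat.prime_iff_prime_int.mp (Fact.out : p.Prime)
  obtain ⟨x, y, hxy⟩ := h
  have hy : (y : ZMod p) ≠ 0 := by
    rw [Ne, ZMod.intCast_zmod_eq_zero_iff_dvd]
    rintro ⟨v, rfl⟩
    obtain ⟨u, rfl⟩ : (p : ℤ) ∣ x :=
      hpp.dvd_of_dvd_pow (n := 2) ⟨1 - D * p * v ^ 2, by linear_combination -hxy⟩
    refine hpp.not_dvd_one ⟨u ^ 2 + D * v ^ 2, mul_left_cancel₀ hpp.ne_zero ?_⟩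
    linear_combination hxy
  have hcast := congrArg (Int.cast : ℤ → ZMod p) hxy
  push_cast at hcast
  rw [ZMod.natCast_self] at hcast
  rw [isSquare_iff_exists_sq]
  refine ⟨x / y, ?_⟩
  field_simp
  linear_combination hcast

theorem splits_kroneckerCubic_dichotomy [Fact p.Prime] (hp2 : p ≠ 2) (hp31 : p ≠ 31)
    (h : IsSquare (-31 : ZMod p)) :
    ((kroneckerCubic (ZMod p)).toPoly.Splits ∧ BinaryForm.Represents ⟨1, 1, 8⟩ p) ∨
      (¬ (kroneckerCubic (ZMod p)).toPoly.Splits ∧ BinaryForm.Represents ⟨2, 1, 4⟩ p) := by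
  obtain ⟨f, hd, hfp⟩ := BinaryForm.exists_a_eq_of_isSquare hp2 h
  have ha : 0 < f.a := by
    rw [hfp]
    exact_mod_cast (Fact.out : p.Prime).pos
  have hrep : f.Represents p := hfp ▸ f.represents_a
  rw [splits_kroneckerCubic_iff_cubicInvariant hd hfp hp2 hp31]
  exact (f.cubicInvariant_dichotomy hd ha).imp (.imp_right (· p hrep)) (.imp_right (· p hrep))

end Representation

theorem kronecker_cubic_reciprocity (p : ℕ) [Fact p.Prime] (hpe : ¬ (p ∣ 2 * 3 * 31)) :
    (Finset.univ.filter (fun a : ZMod p => a ^ 3 + a + 1 = 0)).card = 3 ↔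
      ∃ X Y : ℤ, (p : ℤ) = X ^ 2 + 31 * Y ^ 2 := by
  have hp := (Fact.out : p.Prime)
  have hp2 : p ≠ 2 := by
    rintro rfl
    exact hpe (by norm_num)
  have hp31 : p ≠ 31 := by
    rintro rfl
    exact hpe (by norm_num)
  rw [← splits_kroneckerCubic_iff_card hp31]
  constructor
  · intro h
    have hsq : IsSquare (-31 : ZMod p) :=
      discr_kroneckerCubic (ZMod p) ▸ isSquare_discr_of_splits one_ne_zero h
    have hrep := (splits_kroneckerCubic_dichotomy hp2 hp31 hsq).resolve_right (·.1 h)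
    exact hrep.2.exists_eq_sq_add (by exact_mod_cast hp.odd_of_ne_two hp2)
  · intro h
    have hsq : IsSquare (-31 : ZMod p) := by simpa using isSquare_neg_of_eq_sq_add_mul_sq h
    exact ((splits_kroneckerCubic_dichotomy hp2 hp31 hsq).resolve_right
      fun hrep ↦ not_represents_of_eq_sq_add hp h hrep.2).1
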